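/- (Parallel sequences lemma) Let T be a positive theory with JEP and monster model 𝔐. Suppose φ(x,y) is a positive existential formula and (c̄_i) = (c_{i,0}, c_{i,1})_{i∈I} is an infinite indiscernible sequence of pairs satisfying: (i) c_{i,0} ≡_{c̄_{<i}} c_{i,1} for all i ∈ I; (ii) {φ(x, c_{i,0}) : i ∈ I} is consistent; (iii) {φ(x, c_{i,1}) : i ∈ I} is inconsistent. Then T has SOP₁. -/

import Mathlib

/-!
Write `c_{i,0}` and `c_{i,1}` for `c i false` and `c i true`.

Taking `c_{i,1}` at the first `p` places of a chain and `c_{i,0}` afterwards is consistent for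
`p = 0` and inconsistent for large `p`, so there is a last good `p`. For it, there is a length
`B` such that `φ` is inconsistent at `p` constants `c_{i,1}`, a further `c_{j,1}` and any block
of `B` tuples `c_{i,0}` that comes later. Since the monster model is existentially closed, this
inconsistency is witnessed by a positive existential formula
(`exists_inconsistency_witness`, proved with an ultraproduct).

The formula with SOP₁ is the conjunction of the instances of `φ` at the `p` constants and at
the `B` tuples of a block. Condition (i) and homogeneity give automorphisms `σ_i` that fix all
earlier pairs and send `c_{i,0}` to `c_{i,1}` (`exists_swap`). Every level of the tree has two
consecutive blocks of indices, the one for direction `1` before the one for direction `0`. A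
path with block starts `j_0 < … < j_l` ends in the node `σ_{j_0} ⋯ σ_{j_l}` applied to the block
of `c_{i,0}` starting at `j_l` (`treeBlock`).

Since `σ_i` fixes what comes before `i`, the nodes on a path are obtained, automorphism by
automorphism, from a consistent set (`treeBlock_path`). At `η⌢1`, the first tuple of the block
is `c_{j,1}`, up to the automorphisms collected along `η`, while every node above `η⌢0` is the
image of a later block of `c_{i,0}` under automorphisms that fix `c_{j,1}`, so the two nodes
satisfy the inconsistency witness (`treeBlock_incons`).

The index set need not contain an infinite increasing sequence, so the tree is built only to
each finite depth; saturation then gives the full tree (`hasSOP1_of_finite_trees`).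
-/

/-!
A self-contained formalisation of the basic framework of positive logic
(Ben Yaacov–Poizat style), following Dobrowolski–Kamsma,
"Kim-independence in positive logic".

We work with a fixed language `L` (in universe 0).  Positive existential
formulas, h-inductive sentences, positive theories, homomorphisms,
immersions, existentially closed models, monster models, indiscernible
sequences, thickness, Lascar strong types, global Lascar-invariant types
(presented via realisations in a bigger monster model), Morley sequences,
Kim-dividing and the related independence relations are all defined below.
-/

open FirstOrder Cardinal

namespace PosLog

/-- Positive existential formulas over the language `L`, with free variables
indexed by `α` and `n` (de Bruijn) quantifiable variables. -/
inductive PEFormula (L : FirstOrder.Language.{0, 0}) (α : Type) : ℕ → Type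
  | top {n : ℕ} : PEFormula L α n
  | bot {n : ℕ} : PEFormula L α n
  | equal {n : ℕ} (t₁ t₂ : L.Term (α ⊕ Fin n)) : PEFormula L α n
  | rel {n k : ℕ} (R : L.Relations k) (ts : Fin k → L.Term (α ⊕ Fin n)) : PEFormula L α n
  | and {n : ℕ} (f g : PEFormula L α n) : PEFormula L α n
  | or {n : ℕ} (f g : PEFormula L α n) : PEFormula L α n
  | ex {n : ℕ} (f : PEFormula L α (n + 1)) : PEFormula L α n

/-- Realisation (satisfaction) of a positive existential formula in an
`L`-structure `M`, under a valuation of the free and bound variables. -/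
def PEFormula.Realize {L : FirstOrder.Language.{0, 0}} {M : Type} [L.Structure M] {α : Type} :
    ∀ {n : ℕ}, PEFormula L α n → (α → M) → (Fin n → M) → Prop
  | _, PEFormula.top, _, _ => True
  | _, PEFormula.bot, _, _ => False
  | _, PEFormula.equal t₁ t₂, v, xs => t₁.realize (Sum.elim v xs) = t₂.realize (Sum.elim v xs)
  | _, PEFormula.rel R ts, v, xs =>
      Language.Structure.RelMap R fun i => (ts i).realize (Sum.elim v xs)
  | _, PEFormula.and f g, v, xs => f.Realize v xs ∧ g.Realize v xs
  | _, PEFormula.or f g, v, xs => f.Realize v xs ∨ g.Realize v xs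
  | _, PEFormula.ex f, v, xs => ∃ m, f.Realize v (Fin.snoc xs m)

/-- Satisfaction of a positive existential formula without quantifiable
variables, under a valuation `v` of its free variables. -/
def Sat {L : FirstOrder.Language.{0, 0}} {M : Type} [L.Structure M] {α : Type} (φ : PEFormula L α 0) (v : α → M) : Prop :=
  φ.Realize v fun i => i.elim0

/-- An h-inductive sentence `∀ x (φ(x) → ψ(x))`, where `φ` and `ψ` are
positive existential. A positive theory is a set of h-inductive sentences. -/
structure HSentence (L : FirstOrder.Language.{0, 0}) where
  n : ℕ
  hyp : PEFormula L Empty n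
  concl : PEFormula L Empty n

/-- Satisfaction of an h-inductive sentence in a structure. -/
def HSentence.Holds {L : FirstOrder.Language.{0, 0}} (σ : HSentence L) (M : Type) [L.Structure M] : Prop :=
  ∀ xs : Fin σ.n → M, σ.hyp.Realize Empty.elim xs → σ.concl.Realize Empty.elim xs

/-- `M` is a model of the positive theory `T`. -/
def ModelsTheory {L : FirstOrder.Language.{0, 0}} (T : Set (HSentence L)) (M : Type) [L.Structure M] : Prop :=
  ∀ σ ∈ T, σ.Holds M

/-- A map between `L`-structures is a homomorphism when it preserves
(positive existential) formulas. -/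
def IsHomMap (L : FirstOrder.Language.{0, 0}) {M N : Type} [L.Structure M] [L.Structure N] (h : M → N) : Prop :=
  ∀ {α : Type} (φ : PEFormula L α 0) (v : α → M), Sat φ v → Sat φ (h ∘ v)

/-- A homomorphism is an immersion when it moreover reflects positive
existential formulas. -/
def IsImmersionMap (L : FirstOrder.Language.{0, 0}) {M N : Type} [L.Structure M] [L.Structure N] (h : M → N) : Prop :=
  IsHomMap L h ∧ ∀ {α : Type} (φ : PEFormula L α 0) (v : α → M), Sat φ (h ∘ v) → Sat φ v

/-- A bundled `L`-structure. -/
structure PreModel (L : FirstOrder.Language.{0, 0}) where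
  carrier : Type
  str : L.Structure carrier

attribute [instance] PreModel.str

/-- A bundled structure is a model of `T`. -/
def PreModel.IsModelOf {L : FirstOrder.Language.{0, 0}} (N : PreModel L) (T : Set (HSentence L)) : Prop :=
  ModelsTheory T N.carrier

/-- `M` is an existentially closed (e.c.) model of `T`: it is a model of `T`
and every homomorphism from `M` into a model of `T` is an immersion. -/
def IsECModelOf {L : FirstOrder.Language.{0, 0}} (T : Set (HSentence L)) (M : Type) [L.Structure M] : Prop :=
  ModelsTheory T M ∧
    ∀ (N : PreModel L) (h : M → N.carrier), N.IsModelOf T → IsHomMap L h → IsImmersionMap L h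

/-- The theory `T` has the joint embedding property. -/
def HasJEP {L : FirstOrder.Language.{0, 0}} (T : Set (HSentence L)) : Prop :=
  ∀ M₁ M₂ : PreModel L, M₁.IsModelOf T → M₂.IsModelOf T →
    ∃ (N : PreModel L) (f : M₁.carrier → N.carrier) (g : M₂.carrier → N.carrier),
      N.IsModelOf T ∧ IsHomMap L f ∧ IsHomMap L g

/-- An automorphism of an `L`-structure: a bijection which is a homomorphism
in both directions. -/
def IsAuto (L : FirstOrder.Language.{0, 0}) {M : Type} [L.Structure M] (f : M ≃ M) : Prop :=
  IsHomMap L (f : M → M) ∧ IsHomMap L (f.symm : M → M)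

/-- Two `α`-tuples have the same (positive existential) type over the
parameter set `A`; written `a ≡_A b`. -/
def EqTp (L : FirstOrder.Language.{0, 0}) {M : Type} [L.Structure M] (A : Set M) {α : Type} (a b : α → M) : Prop :=
  ∀ φ : PEFormula L (α ⊕ ↥A) 0,
    Sat φ (Sum.elim a Subtype.val) ↔ Sat φ (Sum.elim b Subtype.val)

/-- One tuple realizes (all formulas of) the type of another tuple over `A`. -/
def RealizesTpOver (L : FirstOrder.Language.{0, 0}) {M : Type} [L.Structure M] (A : Set M) {α : Type} (a b : α → M) : Prop :=
  ∀ φ : PEFormula L (α ⊕ ↥A) 0,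
    Sat φ (Sum.elim a Subtype.val) → Sat φ (Sum.elim b Subtype.val)

/-- A sequence of `α`-tuples, indexed by a linear order, is `A`-indiscernible. -/
def Indisc (L : FirstOrder.Language.{0, 0}) {M : Type} [L.Structure M] (A : Set M) {ι : Type} [LinearOrder ι] {α : Type}
    (c : ι → α → M) : Prop :=
  ∀ (n : ℕ) (i j : Fin n → ι), StrictMono i → StrictMono j →
    EqTp L A (fun p : Fin n × α => c (i p.1) p.2) (fun p : Fin n × α => c (j p.1) p.2)

/-- Two tuples lie on a common infinite `A`-indiscernible sequence
(i.e. they are at Lascar distance at most one over `A`). -/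
def OnIndisc (L : FirstOrder.Language.{0, 0}) {M : Type} [L.Structure M] (A : Set M) {α : Type} (a b : α → M) : Prop :=
  ∃ c : ℕ → α → M, Indisc L A c ∧ ((c 0 = a ∧ c 1 = b) ∨ (c 0 = b ∧ c 1 = a))

/-- Lascar strong type equivalence over `A`: a finite chain in which
consecutive tuples lie on a common `A`-indiscernible sequence; `a ≡^Ls_A b`. -/
def LsEq (L : FirstOrder.Language.{0, 0}) {M : Type} [L.Structure M] (A : Set M) {α : Type} (a b : α → M) : Prop :=
  Relation.ReflTransGen (OnIndisc L A) a b

/-- `M` is a monster model (universal domain) of `T` for the smallness bound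
`κ`: an existentially closed model which is very homogeneous and very
saturated with respect to sets of size `< κ`. -/
structure IsMonster {L : FirstOrder.Language.{0, 0}} (T : Set (HSentence L)) (κ : Cardinal) (M : Type) [L.Structure M] :
    Prop where
  aleph0_lt : ℵ₀ < κ
  ec : IsECModelOf T M
  homogeneous : ∀ (α : Type) (a b : α → M), #α < κ → EqTp L (∅ : Set M) a b →
    ∃ f : M ≃ M, IsAuto L f ∧ ∀ x, f (a x) = b x
  saturated : ∀ (α β : Type) (v : β → M) (p : Set (PEFormula L (α ⊕ β) 0)),
    #α < κ → #β < κ → #(↥p) < κ →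
    (∀ s : Finset (PEFormula L (α ⊕ β) 0), ↑s ⊆ p →
      ∃ a : α → M, ∀ φ ∈ s, Sat φ (Sum.elim a v)) →
    ∃ a : α → M, ∀ φ ∈ p, Sat φ (Sum.elim a v)

/-- Thickness: being an (∅-)indiscernible sequence is type-definable. -/
def IsThick (L : FirstOrder.Language.{0, 0}) (κ : Cardinal) (M : Type) [L.Structure M] : Prop :=
  ∀ α : Type, #α < κ → ∃ Θ : Set (PEFormula L (ℕ × α) 0),
    ∀ c : ℕ → α → M,
      (Indisc L (∅ : Set M) c ↔ ∀ φ ∈ Θ, Sat φ fun p : ℕ × α => c p.1 p.2)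

/-- The theory `T` (with monster model `M`) has SOP₁: there is a formula
`φ(x,y)`, an inconsistency witness `ψ(y₁,y₂)` and a binary tree of parameters
such that paths are consistent while `ψ` witnesses inconsistency of
`φ(x, a_{η⌢1})` with `φ(x, a_ν)` whenever `η⌢0 ⊴ ν`. -/
def HasSOP1 {L : FirstOrder.Language.{0, 0}} (T : Set (HSentence L)) (M : Type) [L.Structure M] : Prop :=
  ∃ (k m : ℕ) (φ : PEFormula L (Fin k ⊕ Fin m) 0) (ψ : PEFormula L (Fin m ⊕ Fin m) 0)
    (t : List Bool → Fin m → M),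
    (∀ σ : ℕ → Bool, ∀ s : Finset ℕ, ∃ x : Fin k → M, ∀ n ∈ s,
      Sat φ (Sum.elim x (t (List.ofFn fun i : Fin n => σ i)))) ∧
    (∀ N : PreModel L, N.IsModelOf T → ∀ y₁ y₂ : Fin m → N.carrier,
      Sat ψ (Sum.elim y₁ y₂) →
        ¬∃ x : Fin k → N.carrier, Sat φ (Sum.elim x y₁) ∧ Sat φ (Sum.elim x y₂)) ∧
    (∀ η ν : List Bool, (η ++ [false]) <+: ν →
      Sat ψ (Sum.elim (t (η ++ [true])) (t ν)))

/-- `T` is NSOP₁ (relative to its monster model `M`). -/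
def NSOP1 {L : FirstOrder.Language.{0, 0}} (T : Set (HSentence L)) (M : Type) [L.Structure M] : Prop :=
  ¬HasSOP1 T M

/-- A subset of the monster model which is (the underlying set of) an
existentially closed submodel of `T`. -/
def IsECSubmodel {L : FirstOrder.Language.{0, 0}} (T : Set (HSentence L)) {M : Type} [L.Structure M] (A : Set M) : Prop :=
  ∃ S : L.Substructure M, (S : Set M) = A ∧ IsECModelOf T S

/-- Finite satisfiability (= consistency) of the union `⋃ i, Sg(x, vs i)` of
instances of a partial type: every finite part is realized in `M`. -/
def FinSatUnion {L : FirstOrder.Language.{0, 0}} {M : Type} [L.Structure M] {ξ ζ : Type}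
    (Sg : Set (PEFormula L (ξ ⊕ ζ) 0)) {ι : Type} (vs : ι → ζ → M) : Prop :=
  ∀ (s : Finset (PEFormula L (ξ ⊕ ζ) 0)) (t : Finset ι), ↑s ⊆ Sg →
    ∃ a : ξ → M, ∀ φ ∈ s, ∀ i ∈ t, Sat φ (Sum.elim a (vs i))

/-- The partial type `Sg(x, b)` divides over `C`: there is a `C`-indiscernible
sequence starting (up to type over `C`) at `b` along which the union is
inconsistent. -/
def Divides {L : FirstOrder.Language.{0, 0}} {M : Type} [L.Structure M] (C : Set M) {ξ γ : Type}
    (Sg : Set (PEFormula L (ξ ⊕ γ) 0)) (b : γ → M) : Prop :=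
  ∃ bs : ℕ → γ → M, Indisc L C bs ∧ EqTp L C (bs 0) b ∧ ¬FinSatUnion Sg bs

/-- The partial type `Sg(x, b)` forks over `C`: it implies a (possibly
infinite) disjunction of formulas, each of which divides over `C`.
Implication is tested in all continuations of the monster `M` that model `T`. -/
def Forks {L : FirstOrder.Language.{0, 0}} (T : Set (HSentence L)) {M : Type} [L.Structure M] (C : Set M) {ξ γ : Type}
    (Sg : Set (PEFormula L (ξ ⊕ γ) 0)) (b : γ → M) : Prop :=
  ∃ (I : Type) (ρ : I → Type) (ψ : ∀ i, PEFormula L (ξ ⊕ ρ i) 0) (e : ∀ i, ρ i → M),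
    (∀ i, Divides C {ψ i} (e i)) ∧
    ∀ (N : PreModel L) (h : M → N.carrier), N.IsModelOf T → IsHomMap L h →
      ∀ x : ξ → N.carrier,
        (∀ φ ∈ Sg, Sat φ (Sum.elim x fun y => h (b y))) →
        ∃ i, Sat (ψ i) (Sum.elim x fun y => h (e i y))

/-- The (complete) type of `a` over `C ∪ b`, presented with the tuple `b`
split off from the parameter set `C`. -/
def tpOverWith (L : FirstOrder.Language.{0, 0}) {M : Type} [L.Structure M] (C : Set M) {ξ γ : Type} (a : ξ → M)
    (b : γ → M) : Set (PEFormula L (ξ ⊕ (γ ⊕ ↥C)) 0) :=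
  {φ | Sat φ (Sum.elim a (Sum.elim b Subtype.val))}

/-- Coheir independence: `a ⫫^u_C b`, i.e. `tp(a/Cb)` is finitely
satisfiable in `C`. -/
def UIndep (L : FirstOrder.Language.{0, 0}) {M : Type} [L.Structure M] (C : Set M) {ξ γ : Type} (a : ξ → M)
    (b : γ → M) : Prop :=
  ∀ φ : PEFormula L (ξ ⊕ (γ ⊕ ↥C)) 0,
    Sat φ (Sum.elim a (Sum.elim b Subtype.val)) →
    ∃ a' : ξ → M, (∀ x, a' x ∈ C) ∧ Sat φ (Sum.elim a' (Sum.elim b Subtype.val))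

section TwoMonsters

/-! Global types are presented through their realisations in a fixed bigger
monster model `BigMon ⊇ Mon` (tuples `β : γ → BigMon` stand for the global
type `tp(β/Mon)`). -/

variable (L : FirstOrder.Language.{0, 0}) {Mon BigMon : Type}
variable [L.Structure Mon] [L.Structure BigMon]

/-- The global type (of `β` over `Mon`) extends the type of the tuple `b`
over the parameter set `B ⊆ Mon`. -/
def SameTpOver (emb : Mon → BigMon) (B : Set Mon) {γ : Type} (b : γ → Mon)
    (β : γ → BigMon) : Prop :=
  EqTp L (emb '' B) (fun x => emb (b x)) β

/-- The global type of `β` over the monster is `A`-Lascar-invariant: for any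
small tuples `b ≡^Ls_A b'` in the monster we have `β b ≡^Ls_A β b'`
(computed in the bigger monster). -/
def LsInvariantOver (κ : Cardinal) (emb : Mon → BigMon) (A : Set Mon) {γ : Type}
    (β : γ → BigMon) : Prop :=
  ∀ (δ : Type) (b b' : δ → Mon), #δ < κ → LsEq L A b b' →
    LsEq L (emb '' A) (Sum.elim β fun x => emb (b x)) (Sum.elim β fun x => emb (b' x))

/-- `α` realizes the `n`-fold tensor power `q^{⊗n}` of the global
`A`-Ls-invariant type `q = tp(β/Mon)`, characterised by the universal
property of the tensor product of Lascar-invariant types: for every small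
`B ⊇ A` and every tuple `(b_j)_{j<n}` in the monster,
`(b_j)_j ≡^Ls_B (α_j)_j` iff `b_j ≡^Ls_{B b_{<j}} β` for every `j < n`. -/
def RealizesTensorPow (κ : Cardinal) (emb : Mon → BigMon) (A : Set Mon) {γ : Type}
    (β : γ → BigMon) (n : ℕ) (α : Fin n → γ → BigMon) : Prop :=
  ∀ B : Set Mon, A ⊆ B → #(↥B) < κ → ∀ b : Fin n → γ → Mon,
    (LsEq L (emb '' B) (fun p : Fin n × γ => emb (b p.1 p.2))
        (fun p : Fin n × γ => α p.1 p.2) ↔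
      ∀ j : Fin n,
        LsEq L ((emb '' B) ∪ ⋃ (k : Fin n) (_ : k < j), Set.range fun x => emb (b k x))
          (fun x => emb (b j x)) β)

/-- `(a_i)_{i ∈ ι}` is a Morley sequence in the global `A`-Ls-invariant type
`q = tp(β/Mon)` over `A`: it has the same Lascar strong type over `A` as some
realisation of the iterated tensor power `q^{⊗ι}`. -/
def IsMorleyIn (κ : Cardinal) (emb : Mon → BigMon) (A : Set Mon) {γ : Type}
    (β : γ → BigMon) {ι : Type} [LinearOrder ι] (a : ι → γ → Mon) : Prop :=
  ∃ α : ι → γ → BigMon,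
    LsEq L (emb '' A) (fun p : ι × γ => emb (a p.1 p.2)) (fun p : ι × γ => α p.1 p.2) ∧
    ∀ (n : ℕ) (g : Fin n → ι), StrictMono g →
      RealizesTensorPow L κ emb A β n fun j => α (g j)

/-- The partial type `Sg(x, b)` (over `M ∪ b`) `q`-divides over `M`, where
`q = tp(β/Mon)` is a global `M`-Ls-invariant type: along any Morley sequence
in `q` over `M` the union of the corresponding instances is inconsistent. -/
def QDivides (κ : Cardinal) (emb : Mon → BigMon) (M : Set Mon) {ξ γ : Type}
    (β : γ → BigMon) (Sg : Set (PEFormula L (ξ ⊕ (γ ⊕ ↥M)) 0)) : Prop :=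
  ∀ bs : ℕ → γ → Mon, IsMorleyIn L κ emb M β bs →
    ¬FinSatUnion Sg fun i => Sum.elim (bs i) (Subtype.val : ↥M → Mon)

/-- Kim-independence `a ⫫^K_M b`: the type `tp(a/Mb)` does not Kim-divide
over `M`, i.e. it does not `q`-divide for any global `M`-Lascar-invariant
extension `q` of `tp(b/M)`. -/
def KimIndep (κ : Cardinal) (emb : Mon → BigMon) (M : Set Mon) {ξ γ : Type}
    (a : ξ → Mon) (b : γ → Mon) : Prop :=
  ∀ β : γ → BigMon, SameTpOver L emb M b β → LsInvariantOver L κ emb M β →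
    ¬QDivides L κ emb M β (tpOverWith L M a b)

/-- `a ⫫^{iLs}_C b` : `tp(a/Cb)` extends to a global `C`-Lascar-invariant
type. -/
def ILsIndep (κ : Cardinal) (emb : Mon → BigMon) (C : Set Mon) {ξ γ : Type}
    (a : ξ → Mon) (b : γ → Mon) : Prop :=
  ∃ α : ξ → BigMon, SameTpOver L emb (C ∪ Set.range b) a α ∧ LsInvariantOver L κ emb C α

end TwoMonsters

end PosLog

namespace PosLog

open Filter

section Formulas

variable {L : FirstOrder.Language.{0, 0}}

/-! ### Operations on positive existential formulas -/

/-- Substitution of variables along `g`, where free variables may become one of `p` new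
quantifiable variables (placed before the existing ones). -/
def PEFormula.relabel {α β : Type} {p : ℕ} (g : α → β ⊕ Fin p) :
    ∀ {n : ℕ}, PEFormula L α n → PEFormula L β (p + n)
  | _, .top => .top
  | _, .bot => .bot
  | n, .equal t₁ t₂ => .equal (t₁.relabel (Language.BoundedFormula.relabelAux g n))
      (t₂.relabel (Language.BoundedFormula.relabelAux g n))
  | n, .rel R ts => .rel R fun i => (ts i).relabel (Language.BoundedFormula.relabelAux g n)
  | _, .and f f' => .and (f.relabel g) (f'.relabel g)
  | _, .or f f' => .or (f.relabel g) (f'.relabel g)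
  | _, .ex f => .ex (f.relabel g)

theorem PEFormula.realize_relabel {M : Type} [L.Structure M] {α β : Type} {p : ℕ}
    (g : α → β ⊕ Fin p) (v : β → M) {n : ℕ} (φ : PEFormula L α n) (xs : Fin (p + n) → M) :
    (φ.relabel g).Realize v xs ↔
      φ.Realize (Sum.elim v (xs ∘ Fin.castAdd n) ∘ g) (xs ∘ Fin.natAdd p) := by
  induction φ with
  | top => rfl
  | bot => rfl
  | equal t₁ t₂ => simp [PEFormula.relabel, PEFormula.Realize]
  | rel R ts => simp [PEFormula.relabel, PEFormula.Realize]
  | and f f' ih ih' => simp only [PEFormula.relabel, PEFormula.Realize, ih, ih']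
  | or f f' ih ih' => simp only [PEFormula.relabel, PEFormula.Realize, ih, ih']
  | @ex n f ih =>
    simp only [PEFormula.relabel, PEFormula.Realize]
    refine exists_congr fun m => ?_
    refine (ih _).trans ?_
    have h1 : (Fin.snoc xs m : Fin (p + n + 1) → M) ∘ Fin.castAdd (n + 1)
        = xs ∘ Fin.castAdd n := by
      funext i
      exact Fin.snoc_castSucc (α := fun _ => M) m xs (Fin.castAdd n i)
    have h2 : (Fin.snoc xs m : Fin (p + n + 1) → M) ∘ Fin.natAdd p
        = Fin.snoc (xs ∘ Fin.natAdd p) m := by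
      funext i
      refine Fin.lastCases ?_ (fun j => ?_) i
      · simp only [Function.comp_apply, Fin.snoc_last]
        exact Fin.snoc_last (α := fun _ => M) m xs
      · simp only [Function.comp_apply, Fin.snoc_castSucc]
        exact Fin.snoc_castSucc (α := fun _ => M) m xs (Fin.natAdd p j)
    exact iff_of_eq (congrArg₂ _ (congrArg (fun z => Sum.elim v z ∘ g) h1) h2)

/-- Renaming of free variables. -/
def PEFormula.rename {α β : Type} (g : α → β) (φ : PEFormula L α 0) : PEFormula L β 0 :=
  φ.relabel (p := 0) (Sum.inl ∘ g)

theorem sat_rename {M : Type} [L.Structure M] {α β : Type} (g : α → β)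
    (φ : PEFormula L α 0) (v : β → M) : Sat (φ.rename g) v ↔ Sat φ (v ∘ g) := by
  refine (PEFormula.realize_relabel _ v φ _).trans ?_
  exact iff_of_eq (congrArg₂ _ rfl (Subsingleton.elim _ _))

/-- Existential closure of all quantifiable variables. -/
def PEFormula.exs {α : Type} : ∀ {n : ℕ}, PEFormula L α n → PEFormula L α 0
  | 0, φ => φ
  | _ + 1, φ => PEFormula.exs (.ex φ)

theorem sat_exs {M : Type} [L.Structure M] {α : Type} (v : α → M) {n : ℕ}
    (φ : PEFormula L α n) : Sat φ.exs v ↔ ∃ xs, φ.Realize v xs := by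
  induction n with
  | zero =>
    refine ⟨fun h => ⟨_, h⟩, fun ⟨xs, h⟩ => ?_⟩
    rw [Subsingleton.elim xs (fun i => i.elim0)] at h
    exact h
  | succ n ih =>
    refine (ih _).trans ⟨?_, ?_⟩
    · rintro ⟨xs, m, h⟩
      exact ⟨_, h⟩
    · rintro ⟨xs, h⟩
      refine ⟨Fin.init xs, xs (Fin.last n), ?_⟩
      rwa [Fin.snoc_init_self]

/-- A term only depends on finitely many variables. -/
theorem term_finite_support {α : Type} (t : L.Term α) :
    ∃ S : Set α, S.Finite ∧ ∀ (M : Type) [L.Structure M] (v v' : α → M),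
      (∀ a ∈ S, v a = v' a) → t.realize v = t.realize v' := by
  induction t with
  | var a => exact ⟨{a}, Set.finite_singleton a, fun M _ v v' h => h a rfl⟩
  | func f ts ih =>
    choose S hS h using ih
    refine ⟨⋃ i, S i, Set.finite_iUnion hS, fun M _ v v' hv => ?_⟩
    simp only [Language.Term.realize]
    congr 1
    funext i
    exact h i M v v' fun a ha => hv a (Set.mem_iUnion.2 ⟨i, ha⟩)

theorem PEFormula.finite_support {α : Type} {n : ℕ} (φ : PEFormula L α n) :
    ∃ S : Set α, S.Finite ∧ ∀ (M : Type) [L.Structure M] (v v' : α → M) (xs : Fin n → M),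
      (∀ a ∈ S, v a = v' a) → (φ.Realize v xs ↔ φ.Realize v' xs) := by
  -- the free variables of a term with both free and quantifiable variables
  have term_case : ∀ {n : ℕ} (t : L.Term (α ⊕ Fin n)),
      ∃ S : Set α, S.Finite ∧ ∀ (M : Type) [L.Structure M] (v v' : α → M) (xs : Fin n → M),
        (∀ a ∈ S, v a = v' a) →
          t.realize (Sum.elim v xs) = t.realize (Sum.elim v' xs) := by
    intro n t
    obtain ⟨S, hS, h⟩ := term_finite_support t
    refine ⟨Sum.inl ⁻¹' S, hS.preimage Sum.inl_injective.injOn, fun M _ v v' xs hv => ?_⟩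
    refine h M _ _ ?_
    rintro (a | i) ha
    · exact hv a ha
    · rfl
  induction φ with
  | top => exact ⟨∅, Set.finite_empty, fun _ _ _ _ _ _ => Iff.rfl⟩
  | bot => exact ⟨∅, Set.finite_empty, fun _ _ _ _ _ _ => Iff.rfl⟩
  | equal t₁ t₂ =>
    obtain ⟨S, hS, h⟩ := term_case t₁
    obtain ⟨S', hS', h'⟩ := term_case t₂
    refine ⟨S ∪ S', hS.union hS', fun M _ v v' xs hv => ?_⟩
    simp only [PEFormula.Realize]
    rw [h M v v' xs fun a ha => hv a (.inl ha), h' M v v' xs fun a ha => hv a (.inr ha)]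
  | rel R ts =>
    choose S hS h using fun i => term_case (ts i)
    refine ⟨⋃ i, S i, Set.finite_iUnion hS, fun M _ v v' xs hv => ?_⟩
    simp only [PEFormula.Realize]
    rw [show (fun i => (ts i).realize (Sum.elim v xs))
      = fun i => (ts i).realize (Sum.elim v' xs) from
        funext fun i => h i M v v' xs fun a ha => hv a (Set.mem_iUnion.2 ⟨i, ha⟩)]
  | and f f' ih ih' =>
    obtain ⟨S, hS, h⟩ := ih
    obtain ⟨S', hS', h'⟩ := ih'
    refine ⟨S ∪ S', hS.union hS', fun M _ v v' xs hv => ?_⟩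
    simp only [PEFormula.Realize]
    rw [h M v v' xs fun a ha => hv a (.inl ha), h' M v v' xs fun a ha => hv a (.inr ha)]
  | or f f' ih ih' =>
    obtain ⟨S, hS, h⟩ := ih
    obtain ⟨S', hS', h'⟩ := ih'
    refine ⟨S ∪ S', hS.union hS', fun M _ v v' xs hv => ?_⟩
    simp only [PEFormula.Realize]
    rw [h M v v' xs fun a ha => hv a (.inl ha), h' M v v' xs fun a ha => hv a (.inr ha)]
  | ex f ih =>
    obtain ⟨S, hS, h⟩ := ih
    exact ⟨S, hS, fun M _ v v' xs hv => exists_congr fun m => h M v v' _ hv⟩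

/-- The finitely many `β`-variables of `φ` can be numbered: `e` enumerates them, and `g` sends
each of them to its number. Stated with a retraction `e ∘ g` so that an empty `β` or an
empty structure needs no separate treatment. -/
theorem finite_variables {α β : Type} (φ : PEFormula L (α ⊕ β) 0) :
    ∃ (m : ℕ) (e : Fin m → β) (g : β → Fin m),
      ∀ (M : Type) [L.Structure M] (v : α → M) (w : β → M),
        Sat φ (Sum.elim v (w ∘ e ∘ g)) ↔ Sat φ (Sum.elim v w) := by
  classical
  obtain ⟨S, hS, h⟩ := φ.finite_support
  rcases isEmpty_or_nonempty β with hβ | ⟨⟨b₀⟩⟩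
  · refine ⟨0, fun i => i.elim0, fun b => isEmptyElim b, fun M _ v w => ?_⟩
    rw [Subsingleton.elim (w ∘ (fun i : Fin 0 => i.elim0) ∘ fun b => isEmptyElim b) w]
  · have hS' : (Sum.inr ⁻¹' S : Set β).Finite := hS.preimage Sum.inr_injective.injOn
    let F : Finset β := insert b₀ hS'.toFinset
    let E := F.equivFin
    refine ⟨F.card, fun i => (E.symm i).1,
      fun b => if hb : b ∈ F then E ⟨b, hb⟩ else E ⟨b₀, Finset.mem_insert_self _ _⟩,
      fun M _ v w => h M _ _ _ ?_⟩
    rintro (a | b) hab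
    · rfl
    · have hb : b ∈ F := Finset.mem_insert_of_mem (by simpa using hab)
      simp [hb]

theorem exists_conj {α : Type} {I : Type} (s : Finset I) (f : I → PEFormula L α 0) :
    ∃ χ : PEFormula L α 0, ∀ (M : Type) [L.Structure M] (v : α → M),
      Sat χ v ↔ ∀ i ∈ s, Sat (f i) v := by
  classical
  induction s using Finset.induction_on with
  | empty => exact ⟨.top, fun M _ v => by simp [Sat, PEFormula.Realize]⟩
  | insert i s _ ih =>
    obtain ⟨χ, h⟩ := ih
    refine ⟨.and (f i) χ, fun M _ v => ?_⟩
    rw [Finset.forall_mem_insert, ← h]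
    rfl

/-- Positive existential formulas are closed under existential quantification over an
arbitrary (possibly infinite) family of variables. -/
theorem exists_exClosure {α β : Type} (φ : PEFormula L (α ⊕ β) 0) :
    ∃ ψ : PEFormula L α 0, ∀ (M : Type) [L.Structure M] (v : α → M),
      Sat ψ v ↔ ∃ w : β → M, Sat φ (Sum.elim v w) := by
  obtain ⟨m, e, g, h⟩ := finite_variables φ
  refine ⟨(φ.relabel (p := m) (Sum.map id g)).exs, fun M _ v => ?_⟩
  have key : ∀ xs : Fin m → M, (φ.relabel (p := m) (Sum.map id g)).Realize v xs ↔
      Sat φ (Sum.elim v (xs ∘ g)) := by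
    intro xs
    refine (PEFormula.realize_relabel _ v φ _).trans ?_
    refine iff_of_eq (congrArg₂ _ ?_ (Subsingleton.elim _ _))
    funext z
    rcases z with a | b <;> rfl
  rw [sat_exs]
  constructor
  · rintro ⟨xs, hx⟩
    exact ⟨_, (key xs).1 hx⟩
  · rintro ⟨w, hw⟩
    exact ⟨w ∘ e, (key _).2 ((h M v w).2 hw)⟩

/-! ### Inconsistency witnesses in existentially closed models -/

/-- A positive existential formula as a first-order formula. -/
def PEFormula.toFO {α : Type} : ∀ {n : ℕ}, PEFormula L α n → L.BoundedFormula α n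
  | _, .top => ⊤
  | _, .bot => ⊥
  | _, .equal t₁ t₂ => t₁.bdEqual t₂
  | _, .rel R ts => R.boundedFormula ts
  | _, .and f g => f.toFO ⊓ g.toFO
  | _, .or f g => f.toFO ⊔ g.toFO
  | _, .ex f => f.toFO.ex

theorem PEFormula.realize_toFO {M : Type} [L.Structure M] {α : Type} {n : ℕ}
    (φ : PEFormula L α n) (v : α → M) (xs : Fin n → M) :
    φ.toFO.Realize v xs ↔ φ.Realize v xs := by
  induction φ with
  | top => simp [PEFormula.toFO, PEFormula.Realize]
  | bot => simp [PEFormula.toFO, PEFormula.Realize]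
  | equal t₁ t₂ => simp [PEFormula.toFO, PEFormula.Realize]
  | rel R ts => simp [PEFormula.toFO, PEFormula.Realize]
  | and f g ih ih' => simp [PEFormula.toFO, PEFormula.Realize, ih, ih']
  | or f g ih ih' => simp [PEFormula.toFO, PEFormula.Realize, ih, ih']
  | ex f ih => simp [PEFormula.toFO, PEFormula.Realize, ih]

/-- Łoś's theorem for positive existential formulas. -/
theorem realize_ultraproduct {I : Type} (u : Ultrafilter I) (N : I → Type)
    [∀ i, L.Structure (N i)] [∀ i, Nonempty (N i)] {α : Type} {n : ℕ} (φ : PEFormula L α n)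
    (v : α → ∀ i, N i) (xs : Fin n → ∀ i, N i) :
    φ.Realize (fun a => (v a : (u : Filter I).Product N))
        (fun j => (xs j : (u : Filter I).Product N)) ↔
      ∀ᶠ i in u, φ.Realize (fun a => v a i) (fun j => xs j i) := by
  rw [← PEFormula.realize_toFO, Language.Ultraproduct.boundedFormula_realize_cast]
  simp only [PEFormula.realize_toFO]

theorem sat_ultraproduct {I : Type} (u : Ultrafilter I) (N : I → Type)
    [∀ i, L.Structure (N i)] [∀ i, Nonempty (N i)] {α : Type} (φ : PEFormula L α 0)
    (v : α → ∀ i, N i) :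
    Sat φ (fun a => (v a : (u : Filter I).Product N)) ↔
      ∀ᶠ i in u, Sat φ (fun a => v a i) := by
  have h := realize_ultraproduct u N φ v (fun j => j.elim0)
  have e1 : (fun j : Fin 0 => ((j.elim0 : ∀ i, N i) : (u : Filter I).Product N))
      = fun j => j.elim0 := Subsingleton.elim _ _
  have e2 : ∀ i, (fun j : Fin 0 => (j.elim0 : ∀ i, N i) i) = fun j => j.elim0 :=
    fun i => Subsingleton.elim _ _
  rw [e1] at h
  simp only [e2] at h
  exact h

/-- In an existentially closed model, the failure of a positive existential formula `θ` at a
tuple is witnessed by a positive existential formula `ψ` contradicting `θ` modulo `T`.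
Otherwise every finite part of the positive diagram of the model would be compatible with
`θ`, and an ultraproduct would give a homomorphism that makes `θ` true and hence is not an
immersion. -/
theorem exists_inconsistency_witness {T : Set (HSentence L)} {M : Type} [L.Structure M]
    [Nonempty M] (hM : IsECModelOf T M) {Z : Type} (θ : PEFormula L Z 0) (a : Z → M)
    (ha : ¬Sat θ a) :
    ∃ ψ : PEFormula L Z 0, Sat ψ a ∧
      ∀ N : PreModel L, N.IsModelOf T → ∀ y : Z → N.carrier, Sat ψ y → ¬Sat θ y := by
  by_contra! hno
  let D := {χ : PEFormula L (Z ⊕ M) 0 // Sat χ (Sum.elim a id)}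
  have step : ∀ s : Finset D, ∃ (N : PreModel L) (y : Z → N.carrier) (w : M → N.carrier),
      N.IsModelOf T ∧ Sat θ y ∧ ∀ χ ∈ s, Sat χ.1 (Sum.elim y w) := by
    intro s
    obtain ⟨χ, hχ⟩ := exists_conj s (fun d : D => d.1)
    obtain ⟨ψ, hψ⟩ := exists_exClosure χ
    obtain ⟨N, hN, y, hy, hθ⟩ :=
      hno ψ ((hψ M a).2 ⟨id, (hχ M _).2 fun d _ => d.2⟩)
    obtain ⟨w, hw⟩ := (hψ _ y).1 hy
    exact ⟨N, y, w, hN, hθ, (hχ _ _).1 hw⟩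
  choose N y w hN hθ hs using step
  have : ∀ s, Nonempty (N s).carrier := fun s => ‹Nonempty M›.map (w s)
  let u : Ultrafilter (Finset D) := Ultrafilter.of atTop
  let P : PreModel L :=
    ⟨(u : Filter (Finset D)).Product fun s => (N s).carrier, inferInstance⟩
  let h : M → P.carrier := fun x => ((fun s => w s x : ∀ s, (N s).carrier) :
    (u : Filter (Finset D)).Product fun s => (N s).carrier)
  have hev : ∀ d : D, ∀ᶠ s : Finset D in (u : Filter (Finset D)), d ∈ s := fun d =>
    Ultrafilter.of_le atTop ((eventually_ge_atTop ({d} : Finset D)).mono fun s hds =>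
      Finset.singleton_subset_iff.1 hds)
  have hP : P.IsModelOf T := by
    intro σ hσ xs hyp
    have hrep : ∃ X : Fin σ.n → ∀ s, (N s).carrier,
        xs = fun j => ((X j : ∀ s, (N s).carrier) :
          (u : Filter (Finset D)).Product fun s => (N s).carrier) :=
      ⟨fun j => (xs j).out, funext fun j => (Quotient.out_eq (xs j)).symm⟩
    obtain ⟨X, rfl⟩ := hrep
    have e0 : (Empty.elim : Empty → P.carrier) = fun z => ((Empty.elim z : ∀ s, (N s).carrier) :
          (u : Filter (Finset D)).Product fun s => (N s).carrier) := Subsingleton.elim _ _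
    rw [e0] at hyp ⊢
    refine (realize_ultraproduct u _ _ _ _).2
      (((realize_ultraproduct u _ _ _ _).1 hyp).mono fun s hs' => ?_)
    rw [Subsingleton.elim (fun z : Empty => (Empty.elim z : ∀ s, (N s).carrier) s)
      Empty.elim] at hs' ⊢
    exact hN s σ hσ _ hs'
  have hom : IsHomMap L h := by
    intro α χ v hv
    refine (sat_ultraproduct u _ χ (fun z s => w s (v z))).2 ?_
    have hmem : Sat (χ.rename (fun z => (Sum.inr (v z) : Z ⊕ M))) (Sum.elim a id) :=
      (sat_rename _ _ _).2 hv
    refine (hev ⟨_, hmem⟩).mono fun s hds => ?_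
    exact (sat_rename (fun z => (Sum.inr (v z) : Z ⊕ M)) χ _).1 (hs s _ hds)
  have hya : (fun z => ((fun s => y s z : ∀ s, (N s).carrier) :
      (u : Filter (Finset D)).Product fun s => (N s).carrier)) = h ∘ a := by
    funext z
    refine Quotient.sound ?_
    -- the equation between the variable `z` and the parameter `a z` lies in the diagram
    let d : D := ⟨.equal (.var (.inl (.inl z))) (.var (.inl (.inr (a z)))), rfl⟩
    exact (hev d).mono fun s hds => hs s d hds
  refine ha ((hM.2 P h hP hom).2 θ a ?_)
  rw [← hya]
  exact (sat_ultraproduct u _ θ (fun z s => y s z)).2 (Eventually.of_forall hθ)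

end Formulas

end PosLog
namespace PosLog

section Tree

variable {L : FirstOrder.Language.{0, 0}}

/-! ### From finite trees to SOP₁ -/

theorem sat_auto {M : Type} [L.Structure M] {f : M ≃ M} (hf : IsAuto L f) {α : Type}
    {φ : PEFormula L α 0} {v : α → M} (h : Sat φ v) : Sat φ (fun a => f (v a)) :=
  hf.1 φ v h

theorem sat_auto_elim {M : Type} [L.Structure M] {f : M ≃ M} (hf : IsAuto L f) {α β : Type}
    {φ : PEFormula L (α ⊕ β) 0} {v : α → M} {w : β → M} (h : Sat φ (Sum.elim v w)) :
    Sat φ (Sum.elim (fun a => f (v a)) (fun b => f (w b))) := by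
  have := sat_auto hf h
  convert this using 1
  funext z
  rcases z with a | b <;> rfl

theorem ofFn_prefix (σ : ℕ → Bool) {n n' : ℕ} (h : n ≤ n') :
    (List.ofFn fun i : Fin n => σ i) <+: List.ofFn fun i : Fin n' => σ i := by
  obtain ⟨d, rfl⟩ := Nat.exists_eq_add_of_le h
  rw [List.ofFn_add]
  exact List.prefix_append _ _

/-- Compactness: SOP₁ follows from the existence of trees that work up to each finite depth.
The parameter tuples are indexed by an arbitrary finite type `Y`, and only countably many
formulas are involved, so the saturation of the monster model applies whatever the size of
the language. -/
theorem hasSOP1_of_finite_trees {T : Set (HSentence L)} {κ : Cardinal} {M : Type}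
    [L.Structure M] (hM : IsMonster T κ M) {k : ℕ} {Y : Type} [Finite Y]
    (φ : PEFormula L (Fin k ⊕ Y) 0) (ψ : PEFormula L (Y ⊕ Y) 0)
    (hψ : ∀ N : PreModel L, N.IsModelOf T → ∀ y₁ y₂ : Y → N.carrier,
      Sat ψ (Sum.elim y₁ y₂) →
        ¬∃ x : Fin k → N.carrier, Sat φ (Sum.elim x y₁) ∧ Sat φ (Sum.elim x y₂))
    (htree : ∀ d : ℕ, ∃ t : List Bool → Y → M,
      (∀ es : List Bool, es.length ≤ d →
        ∃ x : Fin k → M, ∀ es', es' <+: es → Sat φ (Sum.elim x (t es'))) ∧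
      (∀ η ν : List Bool, (η ++ false :: ν).length ≤ d →
        Sat ψ (Sum.elim (t (η ++ [true])) (t (η ++ false :: ν))))) :
    HasSOP1 T M := by
  classical
  -- the formula stating that the path to `es` is consistent
  have hpath : ∀ es : List Bool, ∃ χ : PEFormula L ((List Bool × Y) ⊕ Empty) 0,
      ∀ v : (List Bool × Y) ⊕ Empty → M, Sat χ v ↔
        ∃ x : Fin k → M, ∀ es', es' <+: es → Sat φ (Sum.elim x fun y => v (.inl (es', y))) := by
    intro es
    obtain ⟨χ₀, h₀⟩ := exists_conj es.inits.toFinset fun es' =>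
      φ.rename (Sum.elim Sum.inr fun y => .inl (.inl (es', y)) :
        Fin k ⊕ Y → ((List Bool × Y) ⊕ Empty) ⊕ Fin k)
    obtain ⟨χ, h⟩ := exists_exClosure χ₀
    refine ⟨χ, fun v => (h M v).trans (exists_congr fun x => (h₀ M _).trans ?_)⟩
    simp only [List.mem_toFinset, List.mem_inits, sat_rename, Sum.comp_elim]
    rfl
  choose χ hχ using hpath
  let ρ : List Bool × List Bool → PEFormula L ((List Bool × Y) ⊕ Empty) 0 := fun q =>
    ψ.rename (Sum.elim (fun y => .inl (q.1 ++ [true], y))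
      fun y => .inl (q.1 ++ false :: q.2, y))
  have hρ : ∀ q (v : (List Bool × Y) ⊕ Empty → M), Sat (ρ q) v ↔
      Sat ψ (Sum.elim (fun y => v (.inl (q.1 ++ [true], y)))
        fun y => v (.inl (q.1 ++ false :: q.2, y))) := by
    intro q v
    simp only [ρ, sat_rename, Sum.comp_elim]
    rfl
  let Θ : List Bool ⊕ (List Bool × List Bool) → PEFormula L ((List Bool × Y) ⊕ Empty) 0 :=
    Sum.elim χ ρ
  have hlarge : ∀ z, ∃ D : ℕ, ∀ d, D ≤ d → ∀ t : List Bool → Y → M,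
      (∀ es : List Bool, es.length ≤ d →
        ∃ x : Fin k → M, ∀ es', es' <+: es → Sat φ (Sum.elim x (t es'))) →
      (∀ η ν : List Bool, (η ++ false :: ν).length ≤ d →
        Sat ψ (Sum.elim (t (η ++ [true])) (t (η ++ false :: ν)))) →
      Sat (Θ z) (Sum.elim (fun q : List Bool × Y => t q.1 q.2) Empty.elim) := by
    rintro (es | q)
    · exact ⟨es.length, fun d hd t h1 _ => (hχ es _).2 (h1 es hd)⟩
    · exact ⟨(q.1 ++ false :: q.2).length, fun d hd t _ h2 => (hρ q _).2 (h2 _ _ hd)⟩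
  choose D hD using hlarge
  obtain ⟨a, ha⟩ := hM.saturated (List Bool × Y) Empty Empty.elim (Set.range Θ)
    ((Cardinal.mk_le_aleph0_iff.2 inferInstance).trans_lt hM.aleph0_lt)
    ((Cardinal.mk_le_aleph0_iff.2 inferInstance).trans_lt hM.aleph0_lt)
    ((Cardinal.mk_le_aleph0_iff.2 (Set.countable_range Θ).to_subtype).trans_lt hM.aleph0_lt)
    (by
      intro s hs
      obtain ⟨r, hr⟩ : ∃ r : Finset (List Bool ⊕ (List Bool × List Bool)), s = r.image Θ := by
        obtain ⟨r, -, hr⟩ := Finset.subset_set_image_iff.1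
          (show (s : Set _) ⊆ Θ '' Set.univ by rwa [Set.image_univ])
        exact ⟨r, hr.symm⟩
      obtain ⟨t, h1, h2⟩ := htree (r.sup D)
      refine ⟨fun q => t q.1 q.2, fun χ' hχ' => ?_⟩
      rw [hr] at hχ'
      obtain ⟨z, hz, rfl⟩ := Finset.mem_image.1 hχ'
      exact hD z _ (Finset.le_sup hz) t h1 h2)
  -- transport from `Y` to an initial segment of the natural numbers
  obtain ⟨m, ⟨E⟩⟩ := Finite.exists_equiv_fin Y
  refine ⟨k, m, φ.rename (Sum.map id E), ψ.rename (Sum.map E E),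
    fun es i => a (es, E.symm i), ?_, ?_, ?_⟩
  · intro σ s
    obtain ⟨x, hx⟩ := (hχ (List.ofFn fun i : Fin (s.sup id) => σ i) _).1 (ha _ ⟨.inl _, rfl⟩)
    refine ⟨x, fun n hn => ?_⟩
    rw [sat_rename, Sum.elim_comp_map]
    convert hx _ (ofFn_prefix σ (Finset.le_sup (f := id) hn)) using 2
    · rfl
    · funext y
      simp
  · intro N hN y₁ y₂ h
    rw [sat_rename, Sum.elim_comp_map] at h
    rintro ⟨x, h1, h2⟩
    rw [sat_rename, Sum.elim_comp_map] at h1 h2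
    exact hψ N hN _ _ h ⟨x, h1, h2⟩
  · rintro η ν ⟨ν', rfl⟩
    rw [sat_rename, Sum.elim_comp_map]
    have := (hρ (η, ν') _).1 (ha _ ⟨.inr (η, ν'), rfl⟩)
    convert this using 2
    · funext y
      simp
    · funext y
      simp

/-! ### The tree built from a parallel sequence -/

/-- The first index not used before level `l`: indices below `p` are constants, the root uses
the block of length `B` starting at `p`, and every level uses two blocks. -/
def levelStart (p B l : ℕ) : ℕ := p + B * (2 * l + 1)

/-- The start of the block used at level `l` in direction `e`; the block for `true` comes
before the one for `false`. -/
def blockStart (p B l : ℕ) (e : Bool) : ℕ :=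
  if e then levelStart p B l else levelStart p B l + B

theorem levelStart_succ (p B l : ℕ) : levelStart p B (l + 1) = levelStart p B l + 2 * B := by
  unfold levelStart
  ring

theorem levelStart_mono (p B : ℕ) {l l' : ℕ} (h : l ≤ l') :
    levelStart p B l ≤ levelStart p B l' := by
  unfold levelStart
  gcongr

/-- The block of parameters at a node: starting from the block at `s`, at level `l`, the path
`es` is followed, moving to the block of each successive direction and applying the
automorphisms `σ` attached to the starts of the blocks passed (the earliest one last). -/
def treeBlock {M Y : Type} (C : ℕ → Bool → Y → M) (σ : ℕ → M ≃ M) (p B : ℕ) :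
    ℕ → ℕ → List Bool → ℕ → Y → M
  | _, s, [] => fun b x => C (s + b) false x
  | l, _, e :: es => fun b x =>
      σ (blockStart p B l e) (treeBlock C σ p B (l + 1) (blockStart p B l e) es b x)

/-- For all `i < N`, the map `σ i` is an automorphism that fixes all pairs before `i` and sends
the first member of the `i`-th pair to the second one. -/
def Swaps (L : FirstOrder.Language.{0, 0}) {M Y : Type} [L.Structure M]
    (C : ℕ → Bool → Y → M) (σ : ℕ → M ≃ M) (N : ℕ) : Prop :=
  ∀ i < N, IsAuto L (σ i) ∧ (∀ j < i, ∀ b x, σ i (C j b x) = C j b x) ∧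
    ∀ x, σ i (C i false x) = C i true x

/-- Paths are consistent. The realisation is produced from the end of the path backwards, by
applying the automorphisms to a realisation of the unmodified instances. -/
theorem treeBlock_path {M Y : Type} [L.Structure M] {C : ℕ → Bool → Y → M}
    {σ : ℕ → M ≃ M} {N : ℕ} (hσ : Swaps L C σ N) {p B : ℕ} (hB : 0 < B) {k : ℕ}
    (φ : PEFormula L (Fin k ⊕ Y) 0)
    (hx : ∃ x : Fin k → M, ∀ i < N, Sat φ (Sum.elim x (C i (decide (i < p)))))
    (es : List Bool) : ∀ l : ℕ, levelStart p B (l + es.length) ≤ N →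
      ∃ x : Fin k → M, (∀ i < p, Sat φ (Sum.elim x (C i true))) ∧
        (∀ i, p ≤ i → i < levelStart p B l → Sat φ (Sum.elim x (C i false))) ∧
        ∀ es', es' <+: es → es' ≠ [] → ∀ s, ∀ b < B,
          Sat φ (Sum.elim x (treeBlock C σ p B l s es' b)) := by
  induction es with
  | nil =>
    intro l hl
    obtain ⟨x, hx⟩ := hx
    have hl' : levelStart p B l ≤ N := hl
    have hp : p ≤ levelStart p B l := Nat.le_add_right _ _
    refine ⟨x, fun i hi => ?_, fun i hi hi' => ?_, fun es' h h' => ?_⟩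
    · simpa [hi] using hx i (by omega)
    · simpa [Nat.not_lt.2 hi] using hx i (by omega)
    · exact absurd (List.prefix_nil.1 h) h'
  | cons e es ih =>
    intro l hl
    rw [List.length_cons, ← Nat.add_assoc, Nat.add_right_comm] at hl
    obtain ⟨x, h1, h2, h3⟩ := ih (l + 1) hl
    have hN := (levelStart_mono p B (Nat.le_add_right (l + 1) es.length)).trans hl
    have hsucc := levelStart_succ p B l
    have hp : p ≤ levelStart p B l := Nat.le_add_right _ _
    have hst : levelStart p B l ≤ blockStart p B l e ∧
        blockStart p B l e + B ≤ levelStart p B (l + 1) := by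
      unfold blockStart
      split <;> omega
    obtain ⟨hauto, hfix, -⟩ := hσ (blockStart p B l e) (by omega)
    have hfix' : ∀ j < blockStart p B l e, ∀ b,
        (fun y => σ (blockStart p B l e) (C j b y)) = C j b :=
      fun j hj b => funext fun y => hfix j hj b y
    refine ⟨fun z => σ (blockStart p B l e) (x z), fun i hi => ?_, fun i hi hi' => ?_,
      fun es' hes' hne s b hb => ?_⟩
    · rw [← hfix' i (by omega)]
      exact sat_auto_elim hauto (h1 i hi)
    · rw [← hfix' i (by omega)]
      exact sat_auto_elim hauto (h2 i hi (by omega))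
    · obtain _ | ⟨e', es''⟩ := es'
      · exact absurd rfl hne
      obtain ⟨rfl, hpre⟩ := List.cons_prefix_cons.1 hes'
      refine sat_auto_elim hauto ?_
      by_cases hnil : es'' = []
      · subst hnil
        exact h2 _ (by omega) (by omega)
      · exact h3 es'' hpre hnil _ b hb

/-- The sequence consisting of `p` constants, one more tuple `y`, and a block of length `B`. -/
def glue {M Y : Type} (p B : ℕ) (cst : ℕ → Y → M) (y : Y → M) (blk : ℕ → Y → M) :
    Fin (p + 1 + B) × Y → M := fun z =>
  if z.1.1 < p then cst z.1 z.2 else if z.1.1 = p then y z.2 else blk (z.1 - p - 1) z.2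

/-- An automorphism fixing the constants preserves positive formulas about glued sequences. -/
theorem sat_glue_auto {M Y : Type} [L.Structure M] {f : M ≃ M} (hf : IsAuto L f) {p B : ℕ}
    {ψ : PEFormula L (Fin (p + 1 + B) × Y) 0} {cst : ℕ → Y → M} {y : Y → M}
    {blk : ℕ → Y → M} (hcst : ∀ i < p, ∀ x, f (cst i x) = cst i x)
    (h : Sat ψ (glue p B cst y blk)) :
    Sat ψ (glue p B cst (fun x => f (y x)) fun b x => f (blk b x)) := by
  convert sat_auto hf h using 1
  funext z
  unfold glue
  split_ifs with h1 h2
  · exact (hcst _ h1 _).symm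
  · rfl
  · rfl

/-- A block at or above a start `s > j` satisfies, together with the constants and `C j true`,
the inconsistency witness `ψ`: all the automorphisms involved fix the constants and
`C j true`. -/
theorem treeBlock_above {M Y : Type} [L.Structure M] {C : ℕ → Bool → Y → M}
    {σ : ℕ → M ≃ M} {N : ℕ} (hσ : Swaps L C σ N) {p B : ℕ} (hB : 0 < B)
    (ψ : PEFormula L (Fin (p + 1 + B) × Y) 0)
    (hψ : ∀ j s, p ≤ j → j < s → s + B ≤ N →
      Sat ψ (glue p B (fun i => C i true) (C j true) fun b => C (s + b) false))
    {j : ℕ} (hpj : p ≤ j) (es : List Bool) :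
    ∀ l s : ℕ, levelStart p B (l + es.length) ≤ N → j < s → s + B ≤ N →
      j < levelStart p B l →
      Sat ψ (glue p B (fun i => C i true) (C j true) (treeBlock C σ p B l s es)) := by
  induction es with
  | nil => exact fun l s _ hs hsN _ => hψ j s hpj hs hsN
  | cons e es ih =>
    intro l s hl hs hsN hj
    rw [List.length_cons, ← Nat.add_assoc, Nat.add_right_comm] at hl
    have hN := (levelStart_mono p B (Nat.le_add_right (l + 1) es.length)).trans hl
    have hsucc := levelStart_succ p B l
    have hst : levelStart p B l ≤ blockStart p B l e ∧
        blockStart p B l e + B ≤ levelStart p B (l + 1) := by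
      unfold blockStart
      split <;> omega
    obtain ⟨hauto, hfix, -⟩ := hσ (blockStart p B l e) (by omega)
    have := sat_glue_auto hauto (fun i hi => hfix i (by omega) true)
      (ih (l + 1) (blockStart p B l e) hl (by omega) (by omega) (by omega))
    rwa [show (fun x => σ (blockStart p B l e) (C j true x)) = C j true from
      funext fun x => hfix j (by omega) true x] at this

/-- Nodes above `η⌢0` satisfy the inconsistency witness together with `η⌢1`. The two blocks
after `η` start at `j < s`; the first tuple at `η⌢1` is `C j true`, up to the automorphisms
collected along `η`, which are common to both nodes. -/
theorem treeBlock_incons {M Y : Type} [L.Structure M] {C : ℕ → Bool → Y → M}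
    {σ : ℕ → M ≃ M} {N : ℕ} (hσ : Swaps L C σ N) {p B : ℕ} (hB : 0 < B)
    (ψ : PEFormula L (Fin (p + 1 + B) × Y) 0)
    (hψ : ∀ j s, p ≤ j → j < s → s + B ≤ N →
      Sat ψ (glue p B (fun i => C i true) (C j true) fun b => C (s + b) false))
    (ν : List Bool) (η : List Bool) :
    ∀ l s : ℕ, levelStart p B (l + (η ++ false :: ν).length) ≤ N →
      Sat ψ (glue p B (fun i => C i true) (treeBlock C σ p B l s (η ++ [true]) 0)
        (treeBlock C σ p B l s (η ++ false :: ν))) := by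
  induction η with
  | nil =>
    intro l s hl
    rw [List.nil_append, List.length_cons, ← Nat.add_assoc, Nat.add_right_comm] at hl
    have hN := (levelStart_mono p B (Nat.le_add_right (l + 1) ν.length)).trans hl
    have hsucc := levelStart_succ p B l
    have hp : p ≤ levelStart p B l := Nat.le_add_right _ _
    obtain ⟨-, -, hswap⟩ := hσ (levelStart p B l) (by omega)
    obtain ⟨hauto, hfix, -⟩ := hσ (levelStart p B l + B) (by omega)
    have := sat_glue_auto hauto (fun i hi => hfix i (by omega) true)
      (treeBlock_above hσ hB ψ hψ hp ν (l + 1) (levelStart p B l + B) hl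
        (by omega) (by omega) (by omega))
    rw [show (fun x => σ (levelStart p B l + B) (C (levelStart p B l) true x))
        = fun x => σ (levelStart p B l) (C (levelStart p B l) false x) from
      funext fun x => (hfix _ (by omega) true x).trans (hswap x).symm] at this
    exact this
  | cons e η ih =>
    intro l s hl
    rw [List.cons_append, List.length_cons, ← Nat.add_assoc, Nat.add_right_comm] at hl
    have hN := (levelStart_mono p B
      (Nat.le_add_right (l + 1) (η ++ false :: ν).length)).trans hl
    have hsucc := levelStart_succ p B l
    have hp : p ≤ levelStart p B l := Nat.le_add_right _ _
    have hst : levelStart p B l ≤ blockStart p B l e ∧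
        blockStart p B l e + B ≤ levelStart p B (l + 1) := by
      unfold blockStart
      split <;> omega
    obtain ⟨hauto, hfix, -⟩ := hσ (blockStart p B l e) (by omega)
    exact sat_glue_auto hauto (fun i hi => hfix i (by omega) true)
      (ih (l + 1) (blockStart p B l e) hl)

end Tree

end PosLog
namespace PosLog

section Sequence

variable {L : FirstOrder.Language.{0, 0}}

/-! ### Indiscernibility and homogeneity along chains -/

/-- An increasing enumeration of a finite set, extended arbitrarily to all of `ℕ`. -/
theorem exists_enum {ι : Type} [LinearOrder ι] [Nonempty ι] (t : Finset ι) :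
    ∃ u : ℕ → ι, StrictMonoOn u (Set.Iio t.card) ∧ ∀ a ∈ t, ∃ i < t.card, u i = a := by
  refine ⟨fun i => if h : i < t.card then t.orderEmbOfFin rfl ⟨i, h⟩ else Classical.arbitrary ι,
    fun i hi j hj hij => ?_, fun a ha => ?_⟩
  · simp only [Set.mem_Iio] at hi hj
    simp only [hi, hj, dif_pos]
    exact (t.orderEmbOfFin rfl).strictMono hij
  · have : a ∈ Set.range (t.orderEmbOfFin rfl) := by simpa using ha
    obtain ⟨i, rfl⟩ := this
    exact ⟨i, i.2, by simp⟩

theorem exists_chain (ι : Type) [LinearOrder ι] [Infinite ι] (N : ℕ) :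
    ∃ u : ℕ → ι, StrictMonoOn u (Set.Iio N) := by
  obtain ⟨t, -, ht⟩ := (Set.infinite_univ (α := ι)).exists_subset_card_eq N
  obtain ⟨u, hu, -⟩ := exists_enum t
  exact ⟨u, ht ▸ hu⟩

/-- Indiscernibility, for the choice `sel` of one member of each pair and for some of the
coordinates. -/
theorem indisc_transfer {M : Type} [L.Structure M] {γ ι Y : Type} [LinearOrder ι]
    {c : ι → Bool → γ → M}
    (hindisc : Indisc L (∅ : Set M) fun i => fun p : Bool × γ => c i p.1 p.2) (e : Y → γ)
    {n : ℕ} {u u' : ℕ → ι} (hu : StrictMonoOn u (Set.Iio n))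
    (hu' : StrictMonoOn u' (Set.Iio n)) (sel : ℕ → Bool) (χ : PEFormula L (Fin n × Y) 0)
    (h : Sat χ fun z => c (u z.1) (sel z.1) (e z.2)) :
    Sat χ fun z => c (u' z.1) (sel z.1) (e z.2) := by
  have := (hindisc n (fun i => u i) (fun i => u' i)
    (fun i j hij => hu i.2 j.2 hij) (fun i j hij => hu' i.2 j.2 hij)
    (χ.rename fun z => .inl (z.1, sel z.1, e z.2)))
  rw [sat_rename, sat_rename] at this
  exact this.1 h

/-- Homogeneity turns the equality of types at `i` into an automorphism that fixes finitely
many earlier pairs and sends the first member of the `i`-th pair to the second one. -/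
theorem exists_swap {T : Set (HSentence L)} {κ : Cardinal} {M : Type} [L.Structure M]
    (hM : IsMonster T κ M) {γ ι : Type} [LinearOrder ι] {c : ι → Bool → γ → M}
    (heq : ∀ i : ι,
      EqTp L (⋃ (j : ι) (_ : j < i), (Set.range (c j false) ∪ Set.range (c j true)))
        (c i false) (c i true)) {m : ℕ} (e : Fin m → γ) (n : ℕ) (u : ℕ → ι) (i : ι)
    (hu : ∀ j < n, u j < i) :
    ∃ f : M ≃ M, IsAuto L f ∧ (∀ j < n, ∀ b x, f (c (u j) b (e x)) = c (u j) b (e x)) ∧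
      ∀ x, f (c i false (e x)) = c i true (e x) := by
  let A : Set M := ⋃ (j : ι) (_ : j < i), (Set.range (c j false) ∪ Set.range (c j true))
  have hA : ∀ q : Fin n × Bool × Fin m, c (u q.1) q.2.1 (e q.2.2) ∈ A := by
    rintro ⟨j, b, x⟩
    refine Set.mem_iUnion₂.2 ⟨u j, hu j j.2, ?_⟩
    cases b
    · exact .inl ⟨_, rfl⟩
    · exact .inr ⟨_, rfl⟩
  let par : Fin n × Bool × Fin m → M := fun q => c (u q.1) q.2.1 (e q.2.2)
  obtain ⟨f, hf, h⟩ := hM.homogeneous (Fin m ⊕ (Fin n × Bool × Fin m))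
    (Sum.elim (fun x => c i false (e x)) par) (Sum.elim (fun x => c i true (e x)) par)
    ((Cardinal.mk_le_aleph0_iff.2 inferInstance).trans_lt hM.aleph0_lt) (by
      intro χ
      let r : (Fin m ⊕ (Fin n × Bool × Fin m)) ⊕ ↥(∅ : Set M) → γ ⊕ ↥A :=
        Sum.elim (Sum.elim (fun x => .inl (e x)) fun q => .inr ⟨par q, hA q⟩)
          fun z => (Set.notMem_empty _ z.2).elim
      have := heq i (χ.rename r)
      rw [sat_rename, sat_rename] at this
      have hr : ∀ b, Sum.elim (c i b) (Subtype.val : ↥A → M) ∘ r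
          = Sum.elim (Sum.elim (fun x => c i b (e x)) par) Subtype.val := by
        intro b
        funext z
        rcases z with (x | q) | z
        · rfl
        · rfl
        · exact (Set.notMem_empty _ z.2).elim
      erw [hr, hr] at this
      exact this)
  exact ⟨f, hf, fun j hj b x => h (.inr (⟨j, hj⟩, b, x)), fun x => h (.inl x)⟩

/-- The formula stating that a sequence of `n` parameters is consistent for `φ`. -/
theorem exists_consistency_formula {k n m : ℕ} (φ : PEFormula L (Fin k ⊕ Fin m) 0) :
    ∃ θ : PEFormula L (Fin n × Fin m) 0, ∀ (M : Type) [L.Structure M] (z : Fin n × Fin m → M),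
      Sat θ z ↔ ∃ x : Fin k → M, ∀ i, Sat φ (Sum.elim x fun y => z (i, y)) := by
  obtain ⟨χ, hχ⟩ := exists_conj Finset.univ fun i : Fin n =>
    φ.rename (Sum.elim Sum.inr fun y => .inl (i, y) : Fin k ⊕ Fin m → (Fin n × Fin m) ⊕ Fin k)
  obtain ⟨θ, hθ⟩ := exists_exClosure χ
  refine ⟨θ, fun M _ z => (hθ M z).trans (exists_congr fun x => (hχ M _).trans ?_)⟩
  simp only [Finset.mem_univ, true_imp_iff, sat_rename, Sum.comp_elim]
  rfl

end Sequence

/-- **The parallel sequences lemma** (Dobrowolski–Kamsma, Lemma 2.21).  Let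
`T` be a positive theory with JEP and monster model `Mon`.  Suppose `φ(x,y)`
is a positive existential formula and `(c̄_i) = (c_{i,0}, c_{i,1})_{i ∈ I}`
is an infinite indiscernible sequence of pairs such that
(i) `c_{i,0} ≡_{c̄_{<i}} c_{i,1}` for all `i ∈ I`;
(ii) `{φ(x, c_{i,0}) : i ∈ I}` is consistent;
(iii) `{φ(x, c_{i,1}) : i ∈ I}` is inconsistent.
Then `T` has SOP₁. -/
theorem parallel_sequences_lemma
    {L : FirstOrder.Language.{0, 0}} (T : Set (HSentence L)) (κ : Cardinal)
    (Mon : Type) [L.Structure Mon]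
    (hJEP : HasJEP T)
    (hMon : IsMonster T κ Mon)
    {k : ℕ} {γ : Type} (hγ : #γ < κ)
    (φ : PEFormula L (Fin k ⊕ γ) 0)
    {ι : Type} [LinearOrder ι] [Infinite ι] (hι : #ι < κ)
    (c : ι → Bool → γ → Mon)
    (hindisc : Indisc L (∅ : Set Mon) fun i => fun p : Bool × γ => c i p.1 p.2)
    (heq : ∀ i : ι,
      EqTp L (⋃ (j : ι) (_ : j < i), (Set.range (c j false) ∪ Set.range (c j true)))
        (c i false) (c i true))
    (hcons : ∀ t : Finset ι, ∃ x : Fin k → Mon, ∀ i ∈ t, Sat φ (Sum.elim x (c i false)))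
    (hincons : ¬∀ t : Finset ι, ∃ x : Fin k → Mon, ∀ i ∈ t, Sat φ (Sum.elim x (c i true))) :
    HasSOP1 T Mon := by
  classical
  have hne : Nonempty Mon := by
    by_contra hempty
    rw [not_nonempty_iff] at hempty
    refine hincons fun t => (hcons t).imp fun x hx i hi => ?_
    rw [Subsingleton.elim (c i true) (c i false)]
    exact hx i hi
  -- only finitely many coordinates of the parameters matter
  obtain ⟨m, e, g, hfin⟩ := finite_variables φ
  let φ' : PEFormula L (Fin k ⊕ Fin m) 0 := φ.rename (Sum.map id g)
  have hφ' : ∀ (x : Fin k → Mon) (i : ι) (b : Bool),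
      Sat φ' (Sum.elim x fun y => c i b (e y)) ↔ Sat φ (Sum.elim x (c i b)) := by
    intro x i b
    rw [sat_rename, Sum.elim_comp_map]
    exact hfin Mon x (c i b)
  choose θ hθ using fun n => exists_consistency_formula (n := n) φ'
  have hθc : ∀ (n : ℕ) (u : ℕ → ι) (sel : ℕ → Bool),
      Sat (θ n) (fun z : Fin n × Fin m => c (u z.1) (sel z.1) (e z.2)) ↔
        ∃ x : Fin k → Mon, ∀ i < n, Sat φ (Sum.elim x (c (u i) (sel i))) := by
    intro n u sel
    refine (hθ n Mon _).trans (exists_congr fun x => ?_)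
    refine ⟨fun h i hi => (hφ' _ _ _).1 (h ⟨i, hi⟩), fun h i => (hφ' _ _ _).2 (h i i.2)⟩
  -- `Q p`: taking `c_{i,1}` at the first `p` places and `c_{i,0}` afterwards is consistent
  let Q : ℕ → Prop := fun p => ∀ (n : ℕ) (u : ℕ → ι), StrictMonoOn u (Set.Iio n) →
    ∃ x : Fin k → Mon, ∀ i < n, Sat φ (Sum.elim x (c (u i) (decide (i < p))))
  have hQ0 : Q 0 := by
    intro n u _
    obtain ⟨x, hx⟩ := hcons ((Finset.range n).image u)
    exact ⟨x, fun i hi => hx _ (Finset.mem_image_of_mem u (Finset.mem_range.2 hi))⟩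
  obtain ⟨p, hp, hp'⟩ : ∃ p, Q p ∧ ¬Q (p + 1) := by
    by_contra! hall
    have hQ : ∀ p, Q p := fun p => Nat.rec hQ0 hall p
    refine hincons fun t => ?_
    obtain ⟨u, hu, hsurj⟩ := exists_enum t
    obtain ⟨x, hx⟩ := hQ t.card t.card u hu
    refine ⟨x, fun a ha => ?_⟩
    obtain ⟨i, hi, rfl⟩ := hsurj a ha
    simpa [hi] using hx i hi
  -- a block length `B` for which the inconsistency of `Q (p + 1)` is visible
  obtain ⟨B, hB, u₀, hu₀, hbad⟩ : ∃ B : ℕ, 0 < B ∧ ∃ u : ℕ → ι,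
      StrictMonoOn u (Set.Iio (p + 1 + B)) ∧
      ¬Sat (θ (p + 1 + B)) fun z => c (u z.1) (decide (z.1.1 < p + 1)) (e z.2) := by
    simp only [Q] at hp'
    push Not at hp'
    obtain ⟨n, u, hu, hno⟩ := hp'
    obtain ⟨u', hu'⟩ := exists_chain ι (p + 1 + (n + 1))
    refine ⟨n + 1, n.succ_pos, u', hu', fun hsat => ?_⟩
    obtain ⟨x, hx⟩ := (hθc _ u' fun i => decide (i < p + 1)).1 hsat
    have hsat' := (hθc n u' fun i => decide (i < p + 1)).2 ⟨x, fun i hi => hx i (by omega)⟩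
    have hmono : StrictMonoOn u' (Set.Iio n) :=
      hu'.mono (Set.Iio_subset_Iio (by omega))
    obtain ⟨x', hx'⟩ := (hθc n u fun i => decide (i < p + 1)).1
      (indisc_transfer hindisc e hmono hu (fun i => decide (i < p + 1)) _ hsat')
    obtain ⟨i, hi, hi'⟩ := hno x'
    exact hi' (hx' i hi)
  obtain ⟨ψ₀, hψ₀, hψN⟩ := exists_inconsistency_witness hMon.ec _ _ hbad
  -- the new parameters: `p` constants and a block of length `B`
  let Y := (Fin p ⊕ Fin B) × Fin m
  obtain ⟨Φ, hΦ⟩ := exists_conj (Finset.univ : Finset (Fin p ⊕ Fin B)) fun q =>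
    φ'.rename (Sum.map id fun y => (q, y) : Fin k ⊕ Fin m → Fin k ⊕ Y)
  have hΦ' : ∀ (N : Type) [L.Structure N] (x : Fin k → N) (y : Y → N),
      Sat Φ (Sum.elim x y) ↔ ∀ q, Sat φ' (Sum.elim x fun j => y (q, j)) := by
    intro N _ x y
    refine (hΦ N _).trans ?_
    simp only [Finset.mem_univ, true_imp_iff, sat_rename, Sum.elim_comp_map]
    rfl
  let pos : Fin (p + 1 + B) × Fin m → Y ⊕ Y := fun z =>
    if h : z.1.1 < p then .inl (.inl ⟨z.1, h⟩, z.2)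
    else if h' : z.1.1 = p then .inl (.inr ⟨0, hB⟩, z.2)
    else .inr (.inr ⟨z.1 - p - 1, by omega⟩, z.2)
  refine hasSOP1_of_finite_trees hMon Φ (ψ₀.rename pos) ?_ ?_
  · rintro N hN y₁ y₂ hψ ⟨x, h1, h2⟩
    rw [sat_rename] at hψ
    rw [hΦ'] at h1 h2
    refine hψN N hN _ hψ ((hθ _ _ _).2 ⟨x, fun i => ?_⟩)
    by_cases hi : i.1 < p
    · simpa [pos, hi] using h1 (.inl ⟨i, hi⟩)
    · by_cases hi' : i.1 = p
      · simpa [pos, hi, hi'] using h1 (.inr ⟨0, hB⟩)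
      · simpa [pos, hi, hi'] using h2 (.inr ⟨i - p - 1, by omega⟩)
  intro d
  let N := levelStart p B d
  obtain ⟨u, hu⟩ := exists_chain ι N
  let C : ℕ → Bool → Fin m → Mon := fun i b y => c (u i) b (e y)
  have hswap : ∀ i, ∃ f : Mon ≃ Mon, i < N → IsAuto L f ∧
      (∀ j < i, ∀ b x, f (C j b x) = C j b x) ∧ ∀ x, f (C i false x) = C i true x := by
    intro i
    by_cases hi : i < N
    · obtain ⟨f, hf⟩ := exists_swap hMon heq e i u (u i)
        fun j hj => hu (show j < N from hj.trans hi) hi hj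
      exact ⟨f, fun _ => hf⟩
    · exact ⟨Equiv.refl _, fun h => absurd h hi⟩
  choose σ hσ using hswap
  have hσ' : Swaps L C σ N := hσ
  have hx : ∃ x : Fin k → Mon, ∀ i < N, Sat φ' (Sum.elim x (C i (decide (i < p)))) :=
    (hp N u hu).imp fun x hx i hi => (hφ' _ _ _).2 (hx i hi)
  have hψC : ∀ j s, p ≤ j → j < s → s + B ≤ N →
      Sat ψ₀ (glue p B (fun i => C i true) (C j true) fun b => C (s + b) false) := by
    intro j s hpj hjs hsN
    let v : ℕ → ℕ := fun i => if i < p then i else if i = p then j else s + (i - p - 1)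
    have hv : StrictMonoOn (fun i => u (v i)) (Set.Iio (p + 1 + B)) := by
      intro i hi i' hi' hii'
      simp only [Set.mem_Iio] at hi hi'
      have hvN : ∀ a < p + 1 + B, v a < N := by
        intro a ha
        simp only [v]
        split_ifs <;> omega
      refine hu (hvN i hi) (hvN i' hi') ?_
      simp only [v]
      split_ifs <;> omega
    convert indisc_transfer hindisc e hu₀ hv (fun i => decide (i < p + 1)) ψ₀ hψ₀ using 1
    funext z
    simp only [glue, C, v]
    by_cases h1 : z.1.1 < p
    · simp [h1, Nat.lt_succ_of_lt h1]
    · by_cases h2 : z.1.1 = p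
      · simp [h2]
      · have h3 : ¬z.1.1 < p + 1 := by omega
        simp [h1, h2, h3]
  refine ⟨fun es q => Sum.elim (fun i : Fin p => C i true)
    (fun b : Fin B => treeBlock C σ p B 0 p es b) q.1 q.2, ?_, ?_⟩
  · intro es hes
    obtain ⟨x, h1, h2, h3⟩ := treeBlock_path hσ' hB φ' hx es 0
      (levelStart_mono p B (by omega))
    refine ⟨x, fun es' hes' => (hΦ' _ _ _).2 ?_⟩
    rintro (i | b)
    · exact h1 i i.2
    · by_cases hnil : es' = []
      · subst hnil
        exact h2 (p + b) (by omega) (by simp [levelStart])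
      · exact h3 es' hes' hnil p b b.2
  · intro η ν hlen
    have := treeBlock_incons hσ' hB ψ₀ hψC ν η 0 p (levelStart_mono p B (by omega))
    rw [sat_rename]
    convert this using 1
    funext z
    simp only [glue, pos, Function.comp_apply]
    split_ifs <;> rfl

end PosLog
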